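/- arXiv:1307.3066 — 5 statements merged into one kernel-verified Lean document; each statement's English description precedes it below -/
import Mathlib

section
/- Let Q be a finite quiver and θ a stability condition with θ(𝟙) = 0. For a subset J ⊆ Q₁ the following hold: (1) there exists a θ-semistable representation M of (Q,𝟙) over k with Supp(M) = J if and only if θ(𝟙_{I'}) ≥ 0 for every nonempty I' ∈ S(J); (2) there exists a θ-stable representation M of (Q,𝟙) over k with Supp(M) = J if and only if θ(𝟙_{I'}) > 0 for every nonempty proper subset I' ∈ S(J). -/
open scoped Classical

/-- The indicator vector 𝟙_{I'} of a subset of the vertices. -/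
noncomputable def indVec {Q₀ : Type} (I' : Set Q₀) : Q₀ → ℤ :=
  fun i => if i ∈ I' then 1 else 0

/-- `S(J)`: the set of subsets `I' ⊆ Q₀` such that every arrow `α ∈ J` with
source in `I'` has target in `I'`. -/
def SsetOf {Q₀ Q₁ : Type} (src tgt : Q₁ → Q₀) (J : Set Q₁) : Set (Set Q₀) :=
  {I' | ∀ α ∈ J, src α ∈ I' → tgt α ∈ I'}

/-- A representation of `(Q,𝟙)` over `k` is a tuple `M : Q₁ → k`.  It is
`θ`-semistable if `θ(𝟙_{I'}) ≥ 0` for every subrepresentation, where a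
subrepresentation is a tuple of subspaces `V'_i ⊆ k` with `M_α · V'_i ⊆ V'_j`
for every arrow `α : i → j`, and `I' = {i : V'_i = k}`. -/
def IsSemistableRep {k : Type} [Field k] {Q₀ Q₁ : Type} (src tgt : Q₁ → Q₀)
    (θ : (Q₀ → ℤ) →ₗ[ℤ] ℤ) (M : Q₁ → k) : Prop :=
  ∀ V' : Q₀ → Submodule k k,
    (∀ α : Q₁, ∀ v ∈ V' (src α), M α • v ∈ V' (tgt α)) →
      0 ≤ θ (indVec {i | V' i = ⊤})

/-- A `θ`-semistable representation is `θ`-stable if moreover `θ(𝟙_{I'}) > 0`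
for every subrepresentation with `∅ ≠ I' ≠ Q₀`. -/
def IsStableRep {k : Type} [Field k] {Q₀ Q₁ : Type} (src tgt : Q₁ → Q₀)
    (θ : (Q₀ → ℤ) →ₗ[ℤ] ℤ) (M : Q₁ → k) : Prop :=
  IsSemistableRep src tgt θ M ∧
    ∀ V' : Q₀ → Submodule k k,
      (∀ α : Q₁, ∀ v ∈ V' (src α), M α • v ∈ V' (tgt α)) →
        {i | V' i = ⊤}.Nonempty → {i | V' i = ⊤} ≠ Set.univ →
          0 < θ (indVec {i | V' i = ⊤})

theorem aux_mem {k : Type} [Field k] {Q₀ Q₁ : Type} (src tgt : Q₁ → Q₀) (M : Q₁ → k)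
    (V' : Q₀ → Submodule k k)
    (h : ∀ α : Q₁, ∀ v ∈ V' (src α), M α • v ∈ V' (tgt α)) :
    {i | V' i = ⊤} ∈ SsetOf src tgt {α | M α ≠ 0} := by
  intro α hα hs
  simp only [Set.mem_ofPred_eq] at hα hs ⊢
  rw [Submodule.eq_top_iff']
  intro x
  have h1 := h α ((M α)⁻¹ * x) (by rw [hs]; trivial)
  rwa [smul_eq_mul, mul_inv_cancel_left₀ hα] at h1

theorem aux_ex {k : Type} [Field k] {Q₀ Q₁ : Type} (src tgt : Q₁ → Q₀) (M : Q₁ → k)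
    (I' : Set Q₀) (h : I' ∈ SsetOf src tgt {α | M α ≠ 0}) :
    ∃ V' : Q₀ → Submodule k k,
      (∀ α : Q₁, ∀ v ∈ V' (src α), M α • v ∈ V' (tgt α)) ∧ {i | V' i = ⊤} = I' := by
  refine ⟨fun i => if i ∈ I' then ⊤ else ⊥, ?_, ?_⟩
  · intro α v hv
    by_cases hM : M α = 0
    · rw [hM, zero_smul]; exact Submodule.zero_mem _
    · by_cases hs : src α ∈ I'
      · have ht : tgt α ∈ I' := h α hM hs
        simp [ht]
      · simp only [hs, if_false, Submodule.mem_bot] at hv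
        rw [hv, smul_zero]; exact Submodule.zero_mem _
  · ext i
    have hbt : (⊥ : Submodule k k) ≠ ⊤ := by
      intro hb
      have h1 : (1 : k) ∈ (⊥ : Submodule k k) := by rw [hb]; trivial
      exact one_ne_zero ((Submodule.mem_bot k).1 h1)
    change (if i ∈ I' then (⊤ : Submodule k k) else ⊥) = ⊤ ↔ i ∈ I'
    by_cases hi : i ∈ I'
    · rw [if_pos hi]; exact ⟨fun _ => hi, fun _ => rfl⟩
    · rw [if_neg hi]; exact ⟨fun hb => absurd hb hbt, fun h' => absurd h' hi⟩

theorem aux_supp {k : Type} [Field k] {Q₁ : Type} (J : Set Q₁) :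
    ∃ M : Q₁ → k, {α | M α ≠ 0} = J := by
  refine ⟨fun α => if α ∈ J then 1 else 0, ?_⟩
  ext α
  by_cases h : α ∈ J <;> simp [h]

theorem aux_empty {Q₀ : Type} (θ : (Q₀ → ℤ) →ₗ[ℤ] ℤ) : θ (indVec ∅) = 0 := by
  have : indVec (∅ : Set Q₀) = 0 := by ext i; simp [indVec]
  rw [this, map_zero]

theorem aux_univ {Q₀ : Type} (θ : (Q₀ → ℤ) →ₗ[ℤ] ℤ) (hθ : θ (fun _ => 1) = 0) :
    θ (indVec Set.univ) = 0 := by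
  have : indVec (Set.univ : Set Q₀) = fun _ => 1 := by ext i; simp [indVec]
  rw [this, hθ]

/-- Existence of a `θ`-semistable (resp. `θ`-stable)
representation of `(Q,𝟙)` over `k` with support `J`, characterized via `S(J)`. -/
theorem stmt0 {k : Type} [Field k] {Q₀ Q₁ : Type} [Fintype Q₀] [Fintype Q₁]
    (src tgt : Q₁ → Q₀) (θ : (Q₀ → ℤ) →ₗ[ℤ] ℤ)
    (hθ : θ (fun _ => 1) = 0) (J : Set Q₁) :
    ((∃ M : Q₁ → k, {α | M α ≠ 0} = J ∧ IsSemistableRep src tgt θ M) ↔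
      ∀ I' ∈ SsetOf src tgt J, I'.Nonempty → 0 ≤ θ (indVec I')) ∧
    ((∃ M : Q₁ → k, {α | M α ≠ 0} = J ∧ IsStableRep src tgt θ M) ↔
      ∀ I' ∈ SsetOf src tgt J, I'.Nonempty → I' ≠ Set.univ → 0 < θ (indVec I')) := by
  constructor
  · constructor
    · rintro ⟨M, rfl, hM⟩ I' hI _
      obtain ⟨V', hV, rfl⟩ := aux_ex src tgt M I' hI
      exact hM V' hV
    · intro h
      obtain ⟨M, rfl⟩ := aux_supp (k := k) J
      refine ⟨M, rfl, fun V' hV => ?_⟩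
      rcases Set.eq_empty_or_nonempty {i | V' i = ⊤} with he | hne
      · rw [he, aux_empty]
      · exact h _ (aux_mem src tgt M V' hV) hne
  · constructor
    · rintro ⟨M, rfl, hM⟩ I' hI hne hu
      obtain ⟨V', hV, rfl⟩ := aux_ex src tgt M I' hI
      exact hM.2 V' hV hne hu
    · intro h
      obtain ⟨M, rfl⟩ := aux_supp (k := k) J
      refine ⟨M, rfl, fun V' hV => ?_, fun V' hV => h _ (aux_mem src tgt M V' hV)⟩
      rcases Set.eq_empty_or_nonempty {i | V' i = ⊤} with he | hne
      · rw [he, aux_empty]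
      · by_cases hu : {i | V' i = ⊤} = Set.univ
        · rw [hu, aux_univ θ hθ]
        · exact (h _ (aux_mem src tgt M V' hV) hne hu).le
end

section
/- Let 𝔠 be any W-invariant homogeneous ideal of C. Then p(𝔠) is an ideal of A, and the map induced by p on quotients restricts to an isomorphism of graded ℚ-vector spaces from the anti-invariant part (C/𝔠)^a onto A/p(𝔠) which decreases degrees by δ; i.e. for every i, ((C/𝔠)^a)_{i+δ} ≅ (A/p(𝔠))_i. -/
open MvPolynomial

set_option maxHeartbeats 1000000
set_option synthInstance.maxHeartbeats 400000

/-- The index set of the variables `t_{i,ν}`, `i ∈ Q₀`, `1 ≤ ν ≤ d_i`. -/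
abbrev Vars {Q₀ : Type} (d : Q₀ → ℕ) : Type := Σ i : Q₀, Fin (d i)

/-- The polynomial ring `C = ℚ[t_{i,ν}]`. -/
abbrev CRing {Q₀ : Type} (d : Q₀ → ℕ) : Type := MvPolynomial (Vars d) ℚ

/-- The group `W = ∏_i S_{d_i}`. -/
abbrev Wgrp {Q₀ : Type} (d : Q₀ → ℕ) : Type := ∀ i : Q₀, Equiv.Perm (Fin (d i))

/-- The action of `w ∈ W` on `C` by `w·t_{i,ν} = t_{i,w_i(ν)}`. -/
noncomputable def wAct {Q₀ : Type} (d : Q₀ → ℕ) (w : Wgrp d) : CRing d →ₐ[ℚ] CRing d :=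
  MvPolynomial.rename (fun x => ⟨x.1, w x.1 x.2⟩)

/-- The sign `sign(w) = ∏_i sign(w_i)` of `w ∈ W`, as a rational number. -/
def wSgn {Q₀ : Type} [Fintype Q₀] (d : Q₀ → ℕ) (w : Wgrp d) : ℚ :=
  ∏ i : Q₀, ((Equiv.Perm.sign (w i) : ℤ) : ℚ)

/-- The invariant ring `A = C^W`. -/
noncomputable def Ainv {Q₀ : Type} (d : Q₀ → ℕ) : Subalgebra ℚ (CRing d) where
  carrier := {f | ∀ w : Wgrp d, wAct d w f = f}
  mul_mem' := by intro a b ha hb w; rw [map_mul, ha w, hb w]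
  add_mem' := by intro a b ha hb w; rw [map_add, ha w, hb w]
  algebraMap_mem' := by intro r w; simp [wAct, MvPolynomial.algebraMap_eq]

noncomputable instance {Q₀ : Type} (d : Q₀ → ℕ) : Algebra (↥(Ainv d)) (CRing d) :=
  (Ainv d).toAlgebra

/-- The discriminant `Δ = ∏_i ∏_{μ<ν} (t_{i,ν} − t_{i,μ})`. -/
noncomputable def Delta {Q₀ : Type} [Fintype Q₀] (d : Q₀ → ℕ) : CRing d :=
  ∏ i : Q₀, ∏ ν : Fin (d i), ∏ μ ∈ Finset.univ.filter (fun μ : Fin (d i) => μ < ν),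
    (X (⟨i, ν⟩ : Vars d) - X (⟨i, μ⟩ : Vars d))

/-- `δ = deg Δ`. -/
noncomputable def deltaDeg {Q₀ : Type} [Fintype Q₀] (d : Q₀ → ℕ) : ℕ :=
  (Delta d).totalDegree

section Helpers

variable {Q₀ : Type} [Fintype Q₀] [DecidableEq Q₀] (d : Q₀ → ℕ)

theorem delta_eq_vdm : Delta d = ∏ i : Q₀,
    (Matrix.vandermonde (fun ν : Fin (d i) => (X (⟨i, ν⟩ : Vars d) : CRing d))).det := by
  unfold Delta
  refine Finset.prod_congr rfl fun i _ => ?_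
  rw [Matrix.det_vandermonde]
  apply Finset.prod_comm'
  intro x y
  simp

theorem wAct_delta (w : Wgrp d) : wAct d w (Delta d) = wSgn d w • Delta d := by
  rw [delta_eq_vdm, map_prod, wSgn, ← Finset.prod_smul]
  refine Finset.prod_congr rfl fun i _ => ?_
  rw [AlgHom.map_det]
  have := Matrix.det_permute (w i)
    (Matrix.vandermonde (fun ν : Fin (d i) => (X (⟨i, ν⟩ : Vars d) : CRing d)))
  have h2 : ((wAct d w).mapMatrix
      (Matrix.vandermonde (fun ν : Fin (d i) => (X (⟨i, ν⟩ : Vars d) : CRing d)))) =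
      (Matrix.vandermonde (fun ν : Fin (d i) => (X (⟨i, ν⟩ : Vars d) : CRing d))).submatrix
        (w i) id := by
    ext1 a b
    simp [Matrix.vandermonde_apply, wAct]
  rw [h2, this, MvPolynomial.smul_eq_C_mul]
  simp

theorem delta_ne : Delta d ≠ 0 := by
  unfold Delta
  refine Finset.prod_ne_zero_iff.2 fun i _ => Finset.prod_ne_zero_iff.2 fun ν _ =>
    Finset.prod_ne_zero_iff.2 fun μ hμ => ?_
  rw [sub_ne_zero]
  intro h
  have h := MvPolynomial.X_injective h
  simp at h hμ
  exact absurd h hμ.ne'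

theorem delta_hom : (Delta d).IsHomogeneous (deltaDeg d) := by
  have : ∃ n, (Delta d).IsHomogeneous n := by
    refine ⟨_, IsHomogeneous.prod _ _ _ fun i _ => IsHomogeneous.prod _ _ _ fun ν _ =>
      IsHomogeneous.prod _ _ (fun _ => 1) fun μ _ => ?_⟩
    exact (isHomogeneous_X _ _).sub (isHomogeneous_X _ _)
  obtain ⟨n, hn⟩ := this
  rw [deltaDeg, hn.totalDegree (delta_ne d)]
  exact hn

theorem wSgn_sq (w : Wgrp d) : wSgn d w * wSgn d w = 1 := by
  rw [wSgn, ← Finset.prod_mul_distrib]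
  refine Finset.prod_eq_one fun i _ => ?_
  rcases Int.units_eq_one_or (Equiv.Perm.sign (w i)) with h | h <;> simp [h]

theorem hom_of_mul {f g : CRing d} {m n : ℕ} (hf : f.IsHomogeneous m) (hf0 : f ≠ 0)
    (h : (f * g).IsHomogeneous (n + m)) : g.IsHomogeneous n := by
  have key : ∀ j, homogeneousComponent (m + j) (f * g) = f * homogeneousComponent j g := by
    intro j
    letI : GradedAlgebra (homogeneousSubmodule (Vars d) ℚ) := MvPolynomial.gradedAlgebra
    have := DirectSum.coe_decompose_mul_add_of_left_mem (homogeneousSubmodule (Vars d) ℚ)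
      (i := m) (j := j) (a := f) (b := g) hf
    rw [← decomposition.decompose'_apply, ← decomposition.decompose'_apply]
    exact this
  have h2 := key n
  rw [add_comm m n, homogeneousComponent_of_mem h, if_pos rfl] at h2
  rw [mul_left_cancel₀ hf0 h2]
  exact homogeneousComponent_isHomogeneous _ _

end Helpers

/-- For a `W`-invariant homogeneous ideal `𝔠` of `C`, the image
`p(𝔠)` is an ideal of `A` (its `A`-span adds nothing), and the map induced by the
symmetrization map `p` on quotients restricts, in each degree, to an isomorphism
from the degree-`(i+δ)` anti-invariant part of `C/𝔠` onto the degree-`i` part of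
`A/p(𝔠)`; i.e. it decreases degrees by `δ`, is injective and surjective. -/
theorem stmt6 {Q₀ : Type} [Fintype Q₀] [DecidableEq Q₀] (d : Q₀ → ℕ) (hd : ∀ i, 0 < d i)
    (𝔠 : Ideal (CRing d))
    (hWinv : ∀ (w : Wgrp d), ∀ f ∈ 𝔠, wAct d w f ∈ 𝔠)
    (hHomog : ∀ f ∈ 𝔠, ∀ n : ℕ, MvPolynomial.homogeneousComponent n f ∈ 𝔠)
    -- the symmetrization map `p`, characterized by `Δ · p(f) = Σ_w sign(w)·(w·f)`,
    -- taking values in the invariant ring `A`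
    (p : CRing d → CRing d)
    (hp : ∀ f : CRing d, Delta d * p f = ∑ w : Wgrp d, wSgn d w • wAct d w f)
    (hpA : ∀ f : CRing d, p f ∈ Ainv d) :
    -- `p(𝔠)` is an ideal of `A`:
    ((Submodule.span ↥(Ainv d) (p '' 𝔠) : Submodule ↥(Ainv d) (CRing d)) : Set (CRing d))
        = p '' 𝔠 ∧
    -- the induced map `[f] ↦ [p f]` on quotients is a degree-(−δ) isomorphism
    -- from the anti-invariants of `C/𝔠` onto `A/p(𝔠)`:
    ∀ i : ℕ,
      (∀ f : CRing d, f.IsHomogeneous (i + deltaDeg d) →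
        (∀ w : Wgrp d, wAct d w f - wSgn d w • f ∈ 𝔠) →
        (p f).IsHomogeneous i) ∧
      (∀ f : CRing d, f.IsHomogeneous (i + deltaDeg d) →
        (∀ w : Wgrp d, wAct d w f - wSgn d w • f ∈ 𝔠) →
        p f ∈ Submodule.span ↥(Ainv d) (p '' 𝔠) → f ∈ 𝔠) ∧
      (∀ a : CRing d, a ∈ Ainv d → a.IsHomogeneous i →
        ∃ f : CRing d, f.IsHomogeneous (i + deltaDeg d) ∧
          (∀ w : Wgrp d, wAct d w f = wSgn d w • f) ∧
          a - p f ∈ Submodule.span ↥(Ainv d) (p '' 𝔠)) := by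
  classical
  have hΔ := delta_ne d
  have hadd : ∀ f g, p (f + g) = p f + p g := by
    intro f g
    apply mul_left_cancel₀ hΔ
    rw [mul_add, hp, hp, hp, ← Finset.sum_add_distrib]
    simp
  have hmul : ∀ a ∈ Ainv d, ∀ f, p (a * f) = a * p f := by
    intro a ha f
    apply mul_left_cancel₀ hΔ
    rw [mul_left_comm, hp, hp, Finset.mul_sum]
    refine Finset.sum_congr rfl fun w _ => ?_
    rw [map_mul, ha w, mul_smul_comm]
  have hspan : ((Submodule.span ↥(Ainv d) (p '' 𝔠) : Submodule ↥(Ainv d) (CRing d)) :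
      Set (CRing d)) = p '' 𝔠 := by
    refine Set.Subset.antisymm ?_ Submodule.subset_span
    intro x hx
    refine Submodule.span_induction (p := fun x _ => x ∈ p '' 𝔠) ?_ ?_ ?_ ?_ hx
    · intro x hx; exact hx
    · exact ⟨0, 𝔠.zero_mem, by simpa using hmul 0 (Ainv d).zero_mem 0⟩
    · rintro _ _ _ _ ⟨f, hf, rfl⟩ ⟨g, hg, rfl⟩
      exact ⟨f + g, 𝔠.add_mem hf hg, hadd f g⟩
    · rintro a _ _ ⟨f, hf, rfl⟩
      exact ⟨a.1 * f, 𝔠.mul_mem_left _ hf, hmul a.1 a.2 f⟩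
  have hcard : ((Fintype.card (Wgrp d) : ℕ) : ℚ) ≠ 0 := by
    exact_mod_cast Fintype.card_ne_zero
  have hsm : ∀ (c : ℚ) (f : CRing d), f ∈ 𝔠 → c • f ∈ 𝔠 := by
    intro c f hf
    rw [MvPolynomial.smul_eq_C_mul]
    exact 𝔠.mul_mem_left _ hf
  refine ⟨hspan, fun i => ⟨?_, ?_, ?_⟩⟩
  · intro f hf _
    refine hom_of_mul d (delta_hom d) hΔ ?_
    rw [hp]
    refine IsHomogeneous.sum _ _ _ fun w _ => ?_
    rw [MvPolynomial.smul_eq_C_mul]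
    exact (IsHomogeneous.rename_isHomogeneous hf).C_mul _
  · intro f hf hw hpf
    rw [← SetLike.mem_coe, hspan] at hpf
    obtain ⟨g, hg, hgf⟩ := hpf
    have h1 : (∑ w : Wgrp d, wSgn d w • wAct d w f) ∈ 𝔠 := by
      rw [← hp, ← hgf, hp]
      exact 𝔠.sum_mem fun w _ => hsm _ _ (hWinv w g hg)
    have h2 : (∑ w : Wgrp d, wSgn d w • (wAct d w f - wSgn d w • f)) ∈ 𝔠 :=
      𝔠.sum_mem fun w _ => hsm _ _ (hw w)
    have h3 := 𝔠.sub_mem h1 h2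
    simp only [smul_sub, smul_smul, wSgn_sq, Finset.sum_sub_distrib, sub_sub_cancel, one_smul,
      Finset.sum_const, Finset.card_univ] at h3
    have h4 := hsm ((Fintype.card (Wgrp d) : ℕ) : ℚ)⁻¹ _ h3
    rw [← Nat.cast_smul_eq_nsmul ℚ, smul_smul, inv_mul_cancel₀ hcard, one_smul] at h4
    exact h4
  · intro a ha hai
    have hanti : ∀ w : Wgrp d, wAct d w (((Fintype.card (Wgrp d) : ℕ) : ℚ)⁻¹ • (Delta d * a)) =
        wSgn d w • (((Fintype.card (Wgrp d) : ℕ) : ℚ)⁻¹ • (Delta d * a)) := by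
      intro w
      rw [map_smul, map_mul, wAct_delta, ha w, smul_mul_assoc, smul_comm]
    refine ⟨((Fintype.card (Wgrp d) : ℕ) : ℚ)⁻¹ • (Delta d * a), ?_, hanti, ?_⟩
    · rw [MvPolynomial.smul_eq_C_mul, add_comm]
      exact ((delta_hom d).mul hai).C_mul _
    · have : p (((Fintype.card (Wgrp d) : ℕ) : ℚ)⁻¹ • (Delta d * a)) = a := by
        apply mul_left_cancel₀ hΔ
        rw [hp]
        simp only [hanti]
        simp only [smul_smul, ← mul_assoc, wSgn_sq, one_mul, Finset.sum_const, Finset.card_univ]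
        rw [← Nat.cast_smul_eq_nsmul ℚ, smul_smul, mul_inv_cancel₀ hcard, one_smul]
      rw [this, sub_self]
      exact Submodule.zero_mem _
end

section
/- Let 𝔠 be a W-invariant homogeneous ideal of C with Δ ∉ 𝔠. Assume the graded ℚ-algebra C/𝔠 is finite-dimensional, that its top nonzero degree is L with dim_ℚ (C/𝔠)_L = 1, that for every 0 ≤ i ≤ L the multiplication pairing (C/𝔠)_i × (C/𝔠)_{L−i} → (C/𝔠)_L is a perfect pairing of ℚ-vector spaces, and that W acts trivially on (C/𝔠)_L. Set r := L − 2δ. Then the graded ring A/p(𝔠) satisfies: (A/p(𝔠))_i = 0 for i > r, dim_ℚ (A/p(𝔠))_r = 1, and for every 0 ≤ i ≤ r the multiplication pairing (A/p(𝔠))_i × (A/p(𝔠))_{r−i} → (A/p(𝔠))_r is perfect. -/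
open MvPolynomial

set_option maxHeartbeats 1000000
set_option synthInstance.maxHeartbeats 400000

theorem aux_comp_mul {σ : Type} (a q : MvPolynomial σ ℚ) (m k : ℕ) (ha : a.IsHomogeneous m) :
    homogeneousComponent (m + k) (a * q) = a * homogeneousComponent k q := by
  classical
  letI : GradedAlgebra (homogeneousSubmodule σ ℚ) := MvPolynomial.gradedAlgebra
  have h := DirectSum.coe_decompose_mul_add_of_left_mem (homogeneousSubmodule σ ℚ)
    (i := m) (j := k) (a := a) (b := q) ha
  have e : ∀ (φ : MvPolynomial σ ℚ) (i : ℕ),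
      (DirectSum.decompose (homogeneousSubmodule σ ℚ) φ i : MvPolynomial σ ℚ)
        = homogeneousComponent i φ := fun φ i => decomposition.decompose'_apply φ i
  rw [e, e] at h
  exact h

theorem aux_div {σ : Type} (a q : MvPolynomial σ ℚ) (m n : ℕ) (ha : a.IsHomogeneous m)
    (ha0 : a ≠ 0) (hq0 : q ≠ 0) (h : (a * q).IsHomogeneous n) :
    m ≤ n ∧ q.IsHomogeneous (n - m) := by
  have key : ∀ k, homogeneousComponent k q ≠ 0 → m + k = n := by
    intro k hk
    by_contra hne
    apply mul_ne_zero ha0 hk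
    rw [← aux_comp_mul a q m k ha, homogeneousComponent_of_mem h, if_neg hne]
  have hsum := sum_homogeneousComponent q
  obtain ⟨k, hk⟩ : ∃ k, homogeneousComponent k q ≠ 0 := by
    by_contra hcon
    push Not at hcon
    apply hq0
    rw [← hsum]
    exact Finset.sum_eq_zero fun i _ => hcon i
  have hkn := key k hk
  refine ⟨by omega, ?_⟩
  rw [← hsum]
  apply IsHomogeneous.sum
  intro i _
  by_cases hi : homogeneousComponent i q = 0
  · rw [hi]; exact isHomogeneous_zero _ _ _
  · have := key i hi
    have e : n - m = i := by omega
    rw [e]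
    exact homogeneousComponent_isHomogeneous i q

theorem aux_Delta_hom {Q₀ : Type} [Fintype Q₀] (d : Q₀ → ℕ) (h0 : Delta d ≠ 0) :
    (Delta d).IsHomogeneous (deltaDeg d) := by
  have : ∃ n, (Delta d).IsHomogeneous n := by
    refine ⟨∑ i : Q₀, ∑ ν : Fin (d i), ∑ _μ ∈ Finset.univ.filter (fun μ : Fin (d i) => μ < ν), 1, ?_⟩
    · unfold Delta
      apply IsHomogeneous.prod
      intro i _
      apply IsHomogeneous.prod
      intro ν _
      apply IsHomogeneous.prod
      intro μ _
      exact (isHomogeneous_X _ _).sub (isHomogeneous_X _ _)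
  obtain ⟨n, hn⟩ := this
  have := hn.totalDegree h0
  unfold deltaDeg
  rw [this]; exact hn

theorem aux_Delta_act {Q₀ : Type} [Fintype Q₀] (d : Q₀ → ℕ) (w : Wgrp d) :
    wAct d w (Delta d) = wSgn d w • Delta d := by
  unfold wAct wSgn Delta
  rw [MvPolynomial.smul_eq_C_mul, map_prod, map_prod, ← Finset.prod_mul_distrib]
  refine Finset.prod_congr rfl fun i _ => ?_
  have h := Equiv.Perm.prod_Iio_comp_eq_sign_mul_prod (w i)
    (f := fun μ ν => (X (⟨i, ν⟩ : Vars d) - X (⟨i, μ⟩ : Vars d) : CRing d)) (by intros; ring)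
  have e : ∀ ν : Fin (d i), Finset.univ.filter (fun μ : Fin (d i) => μ < ν) = Finset.Iio ν := by
    intro ν; ext; simp
  simp only [e, map_prod, map_sub, rename_X]
  rw [h]
  simp

theorem aux_wSgn_sq {Q₀ : Type} [Fintype Q₀] (d : Q₀ → ℕ) (w : Wgrp d) :
    wSgn d w * wSgn d w = 1 := by
  unfold wSgn
  rw [← Finset.prod_mul_distrib]
  refine Finset.prod_eq_one fun i _ => ?_
  rcases Int.units_eq_one_or (Equiv.Perm.sign (w i)) with h | h <;> simp [h]

/-- Poincaré duality descends from `C/𝔠` to `A/p(𝔠)`: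
if `C/𝔠` is a finite-dimensional graded ring with top degree `L`, one-dimensional
top piece, perfect multiplication pairings, trivial `W`-action on the top piece,
and `Δ ∉ 𝔠`, then `A/p(𝔠)` vanishes above `r = L − 2δ`, is one-dimensional in
degree `r`, and has perfect multiplication pairings
`(A/p(𝔠))_i × (A/p(𝔠))_{r−i} → (A/p(𝔠))_r`. -/
theorem stmt8 {Q₀ : Type} [Fintype Q₀] [DecidableEq Q₀] (d : Q₀ → ℕ) (hd : ∀ i, 0 < d i)
    (𝔠 : Ideal (CRing d))
    (hWinv : ∀ (w : Wgrp d), ∀ f ∈ 𝔠, wAct d w f ∈ 𝔠)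
    (hHomog : ∀ f ∈ 𝔠, ∀ n : ℕ, MvPolynomial.homogeneousComponent n f ∈ 𝔠)
    (hΔ : Delta d ∉ 𝔠)
    -- the symmetrization map `p`
    (p : CRing d → CRing d)
    (hp : ∀ f : CRing d, Delta d * p f = ∑ w : Wgrp d, wSgn d w • wAct d w f)
    (hpA : ∀ f : CRing d, p f ∈ Ainv d)
    (L : ℕ)
    -- `C/𝔠` is finite dimensional with top nonzero degree `L`:
    (hTop : ∀ n : ℕ, L < n → ∀ f : CRing d, f.IsHomogeneous n → f ∈ 𝔠)
    -- `dim_ℚ (C/𝔠)_L = 1`: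
    (hOneDim : ∃ f₀ : CRing d, f₀.IsHomogeneous L ∧ f₀ ∉ 𝔠 ∧
      ∀ g : CRing d, g.IsHomogeneous L → ∃ c : ℚ, g - c • f₀ ∈ 𝔠)
    -- the multiplication pairing `(C/𝔠)_i × (C/𝔠)_{L−i} → (C/𝔠)_L` is perfect:
    (hPerfect : ∀ i : ℕ, i ≤ L → ∀ f : CRing d, f.IsHomogeneous i → f ∉ 𝔠 →
      ∃ g : CRing d, g.IsHomogeneous (L - i) ∧ f * g ∉ 𝔠)
    -- `W` acts trivially on `(C/𝔠)_L`:
    (hWTop : ∀ f : CRing d, f.IsHomogeneous L → ∀ w : Wgrp d, wAct d w f - f ∈ 𝔠) :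
    -- `(A/p(𝔠))_i = 0` for `i > r := L − 2δ`:
    (∀ i : ℕ, L - 2 * deltaDeg d < i → ∀ a : CRing d, a ∈ Ainv d → a.IsHomogeneous i →
      a ∈ Submodule.span ↥(Ainv d) (p '' 𝔠)) ∧
    -- `dim_ℚ (A/p(𝔠))_r = 1`:
    (∃ a₀ : CRing d, a₀ ∈ Ainv d ∧ a₀.IsHomogeneous (L - 2 * deltaDeg d) ∧
      a₀ ∉ Submodule.span ↥(Ainv d) (p '' 𝔠) ∧
      ∀ a : CRing d, a ∈ Ainv d → a.IsHomogeneous (L - 2 * deltaDeg d) →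
        ∃ c : ℚ, a - c • a₀ ∈ Submodule.span ↥(Ainv d) (p '' 𝔠)) ∧
    -- the pairing `(A/p(𝔠))_i × (A/p(𝔠))_{r−i} → (A/p(𝔠))_r` is perfect:
    (∀ i : ℕ, i ≤ L - 2 * deltaDeg d → ∀ a : CRing d, a ∈ Ainv d → a.IsHomogeneous i →
      a ∉ Submodule.span ↥(Ainv d) (p '' 𝔠) →
      ∃ b : CRing d, b ∈ Ainv d ∧ b.IsHomogeneous (L - 2 * deltaDeg d - i) ∧
        a * b ∉ Submodule.span ↥(Ainv d) (p '' 𝔠)) := by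
  classical
  have hΔ0 : Delta d ≠ 0 := fun h => hΔ (h ▸ 𝔠.zero_mem)
  have hΔh := aux_Delta_hom d hΔ0
  set D := Delta d with hD
  set δ := deltaDeg d with hδ
  have hQ : ∀ (c : ℚ) (f : CRing d), f ∈ 𝔠 → c • f ∈ 𝔠 := by
    intro c f hf
    rw [MvPolynomial.smul_eq_C_mul]
    exact 𝔠.mul_mem_left _ hf
  have hN : (Fintype.card (Wgrp d) : ℚ) ≠ 0 := by
    exact_mod_cast Fintype.card_ne_zero
  set N : ℚ := (Fintype.card (Wgrp d) : ℚ) with hNdef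
  -- membership criterion
  have hmem : ∀ a : CRing d, a ∈ Ainv d →
      (a ∈ Submodule.span ↥(Ainv d) (p '' 𝔠) ↔ D * a ∈ 𝔠) := by
    intro a ha
    constructor
    · intro h
      clear ha
      induction h using Submodule.span_induction with
      | mem x hx =>
        obtain ⟨f, hf, rfl⟩ := hx
        rw [hp]
        exact 𝔠.sum_mem fun w _ => hQ _ _ (hWinv w f hf)
      | zero => simp
      | add x y _ _ hx hy =>
        rw [mul_add]
        exact 𝔠.add_mem hx hy
      | smul r x _ hx => 
        have : D * (r • x) = (r : CRing d) * (D * x) := by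
          change D * ((r : CRing d) * x) = _
          ring
        rw [this]
        exact 𝔠.mul_mem_left _ hx
    · intro h
      apply Submodule.subset_span
      refine ⟨N⁻¹ • (D * a), hQ _ _ h, ?_⟩
      apply mul_left_cancel₀ hΔ0
      rw [hp]
      have : ∀ w : Wgrp d, wSgn d w • wAct d w (N⁻¹ • (D * a)) = N⁻¹ • (D * a) := by
        intro w
        rw [map_smul, map_mul, ha w, aux_Delta_act, smul_mul_assoc, smul_comm N⁻¹, smul_smul,
          aux_wSgn_sq, one_smul]
      rw [Finset.sum_congr rfl fun w _ => this w, Finset.sum_const, Finset.card_univ,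
        ← Nat.cast_smul_eq_nsmul ℚ, smul_smul, mul_inv_cancel₀ hN, one_smul]
  -- averaging
  have havg : ∀ a g : CRing d, a ∈ Ainv d → (D * a * g).IsHomogeneous L →
      D * a * g ∉ 𝔠 → D * D * (a * p g) ∉ 𝔠 := by
    intro a g ha hh hn hcon
    apply hn
    have e : D * D * (a * p g) = ∑ w : Wgrp d, wAct d w (D * a * g) := by
      have : D * D * (a * p g) = D * a * (D * p g) := by ring
      rw [this, hp, Finset.mul_sum]
      refine Finset.sum_congr rfl fun w _ => ?_
      rw [map_mul, map_mul, ha w, aux_Delta_act]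
      simp only [smul_mul_assoc, mul_smul_comm]
      rfl
    have h2 : ∑ w : Wgrp d, (wAct d w (D * a * g) - D * a * g) ∈ 𝔠 :=
      𝔠.sum_mem fun w _ => hWTop _ hh w
    rw [Finset.sum_sub_distrib, ← e, Finset.sum_const, Finset.card_univ,
      ← Nat.cast_smul_eq_nsmul ℚ] at h2
    have h3 := hQ N⁻¹ _ (𝔠.sub_mem hcon h2)
    rw [sub_sub_cancel, smul_smul, inv_mul_cancel₀ hN, one_smul] at h3
    exact h3
  have core : ∀ (i : ℕ) (a : CRing d), a ∈ Ainv d → a.IsHomogeneous i → D * a ∉ 𝔠 →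
      i + 2 * δ ≤ L ∧ ∃ b, b ∈ Ainv d ∧ b.IsHomogeneous (L - 2 * δ - i) ∧
        D * D * (a * b) ∉ 𝔠 := by
    intro i a ha hai hDa
    have hDh := hΔh.mul hai
    have hle : δ + i ≤ L := by
      by_contra hlt
      exact hDa (hTop (δ + i) (by omega) _ hDh)
    obtain ⟨g, hg, hgn⟩ := hPerfect (δ + i) hle _ hDh hDa
    have hL : (D * a * g).IsHomogeneous L := by
      have := hDh.mul hg
      rwa [Nat.add_sub_cancel' hle] at this
    have hb := havg a g ha hL hgn
    have hp0 : p g ≠ 0 := by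
      intro h; apply hb; rw [h]; simp
    have hph : (D * p g).IsHomogeneous (L - (δ + i)) := by
      rw [hp]
      apply IsHomogeneous.sum
      intro w _
      rw [MvPolynomial.smul_eq_C_mul]
      exact (IsHomogeneous.rename_isHomogeneous hg).C_mul _
    obtain ⟨h1, h2⟩ := aux_div _ _ _ _ hΔh hΔ0 hp0 hph
    refine ⟨by omega, p g, hpA g, ?_, hb⟩
    have : L - 2 * δ - i = L - (δ + i) - δ := by omega
    rwa [this]
  obtain ⟨hL2, a₀, ha₀, ha₀h, ha₀n⟩ := core 0 1 (Ainv d).one_mem (isHomogeneous_one _ _)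
    (by rwa [mul_one])
  rw [one_mul] at ha₀n
  rw [Nat.sub_zero] at ha₀h
  have hDD : ∀ x : CRing d, D * D * x ∉ 𝔠 → D * x ∉ 𝔠 := by
    intro x hx h
    apply hx
    rw [mul_assoc]
    exact 𝔠.mul_mem_left _ h
  refine ⟨?_, ?_, ?_⟩
  · intro i hi a ha hai
    rw [hmem a ha]
    by_contra hcon
    have := (core i a ha hai hcon).1
    omega
  · refine ⟨a₀, ha₀, ha₀h, ?_, ?_⟩
    · rw [hmem a₀ ha₀]; exact hDD _ ha₀n
    · intro a ha hah
      obtain ⟨f₀, _, _, hf₀⟩ := hOneDim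
      have hdeg : ∀ x : CRing d, x.IsHomogeneous (L - 2 * δ) → (D * D * x).IsHomogeneous L := by
        intro x hx
        have := (hΔh.mul hΔh).mul hx
        have e : δ + δ + (L - 2 * δ) = L := by omega
        rwa [e] at this
      obtain ⟨c₁, h₁⟩ := hf₀ _ (hdeg a hah)
      obtain ⟨c₀, h₀⟩ := hf₀ _ (hdeg a₀ ha₀h)
      have hc₀ : c₀ ≠ 0 := by
        rintro rfl
        rw [zero_smul, sub_zero] at h₀
        exact ha₀n h₀
      refine ⟨c₁ / c₀, ?_⟩
      have hmA : a - (c₁ / c₀) • a₀ ∈ Ainv d :=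
        (Ainv d).sub_mem ha ((Ainv d).smul_mem ha₀ _)
      rw [hmem _ hmA]
      have hz : D * D * (a - (c₁ / c₀) • a₀) ∈ 𝔠 := by
        have := 𝔠.sub_mem h₁ (hQ (c₁ / c₀) _ h₀)
        rw [smul_sub, smul_smul, div_mul_cancel₀ _ hc₀, sub_sub_sub_cancel_right,
          ← mul_smul_comm, ← mul_sub] at this
        exact this
      by_contra hcon
      have hh : (a - (c₁ / c₀) • a₀).IsHomogeneous (L - 2 * δ) := by
        rw [MvPolynomial.smul_eq_C_mul]
        exact hah.sub (ha₀h.C_mul _)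
      obtain ⟨_, b, _, _, hb⟩ := core _ _ hmA hh hcon
      apply hb
      rw [← mul_assoc]
      exact 𝔠.mul_mem_right _ hz
  · intro i hi a ha hai han
    rw [hmem a ha] at han
    obtain ⟨_, b, hbA, hbh, hb⟩ := core i a ha hai han
    refine ⟨b, hbA, hbh, ?_⟩
    rw [hmem _ ((Ainv d).mul_mem ha hbA)]
    exact hDD _ hb
end

section
/- Let m ≥ 2 and R := ℚ[x₁,…,x_{m−1},y] with the standard grading. Then the elements y·x₁ − x₁², …, y·x_{m−1} − x_{m−1}² form a regular sequence in R, and consequently the quotient ring R/(y·x_i − x_i² : 1 ≤ i ≤ m−1) has Hilbert series (1+t)^{m−1}/(1−t); i.e. for every j ≥ 0 the dimension over ℚ of its degree-j homogeneous component equals Σ_{ν=0}^{min(j, m−1)} binom(m−1, ν). -/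
open MvPolynomial

/-- The polynomial ring `R = ℚ[x₁,…,x_{m−1},y]`: the variable `none` is `y` and
`some i` is `x_i`. -/
abbrev Rring (m : ℕ) : Type := MvPolynomial (Option (Fin (m - 1))) ℚ

/-- The element `y·x_i − x_i²` of `R`. -/
noncomputable def relElt (m : ℕ) (i : Fin (m - 1)) : Rring m :=
  X none * X (some i) - X (some i) ^ 2

section Helpers

variable {ι : Type} [DecidableEq ι]

/-- The generic relation `y x_i - x_i^2`. -/
noncomputable def relG (i : ι) : MvPolynomial (Option ι) ℚ :=
  X none * X (some i) - X (some i) ^ 2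

/-- The substitution `x_i ↦ y` for `i ∈ S ∩ T`, `x_i ↦ 0` for `i ∈ S \ T`. -/
noncomputable def subG (S T : Finset ι) : Option ι → MvPolynomial (Option ι) ℚ
  | none => X none
  | some i => if i ∈ S then (if i ∈ T then X none else 0) else X (some i)

lemma dvd_sub_subst {σ : Type} [DecidableEq σ] (v : σ) (p f : MvPolynomial σ ℚ) :
    X v - p ∣ f - aeval (Function.update X v p) f := by
  rw [← Ideal.mem_span_singleton, ← Ideal.Quotient.eq]
  have : (Ideal.Quotient.mkₐ ℚ (Ideal.span {X v - p})) =
      (Ideal.Quotient.mkₐ ℚ (Ideal.span {X v - p})).comp (aeval (Function.update X v p)) := by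
    apply MvPolynomial.algHom_ext
    intro i
    by_cases h : i = v
    · subst h
      simp only [AlgHom.comp_apply, aeval_X, Function.update_self, Ideal.Quotient.mkₐ_eq_mk]
      rw [Ideal.Quotient.eq]
      exact Ideal.mem_span_singleton_self _
    · simp [h]
  exact DFunLike.congr_fun this f

lemma subG_relG (S T : Finset ι) (i : ι) (hi : i ∈ S) : aeval (subG S T) (relG i) = 0 := by
  by_cases h : i ∈ T <;> simp [relG, subG, hi, h, sq]

lemma subG_relG_ne (S T : Finset ι) (i : ι) (hi : i ∉ S) : aeval (subG S T) (relG i) ≠ 0 := by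
  have : aeval (subG S T) (relG i) = relG i := by simp [relG, subG, hi]
  rw [this]
  intro h
  have := congrArg (MvPolynomial.eval (fun v : Option ι => v.elim (2:ℚ) (fun _ => 1))) h
  norm_num [relG] at this

lemma subG_update_zero (S T : Finset ι) (k : ι) (hk : k ∉ S) (f : MvPolynomial (Option ι) ℚ) :
    aeval (subG S T) (aeval (R := ℚ) (Function.update (X : Option ι → MvPolynomial (Option ι) ℚ) (some k) 0) f) =
      aeval (subG (insert k S) (T.erase k)) f := by
  rw [← AlgHom.comp_apply]
  refine DFunLike.congr_fun (MvPolynomial.algHom_ext ?_) f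
  rintro (_ | i)
  · simp [subG]
  · by_cases h : i = k
    · subst h; simp [subG]
    · simp [subG, h]

lemma subG_update_zero' (S T : Finset ι) (k : ι) (f : MvPolynomial (Option ι) ℚ) :
    aeval (subG (insert k S) (insert k T)) (aeval (R := ℚ) (Function.update (X : Option ι → MvPolynomial (Option ι) ℚ) (some k) 0) f) =
      aeval (subG (insert k S) (T.erase k)) f := by
  rw [← AlgHom.comp_apply]
  refine DFunLike.congr_fun (MvPolynomial.algHom_ext ?_) f
  rintro (_ | i)
  · simp [subG]
  · by_cases h : i = k
    · subst h; simp [subG]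
    · simp [subG, h]

lemma subG_update_y (S T : Finset ι) (k : ι) (hk : k ∉ S) (f : MvPolynomial (Option ι) ℚ) :
    aeval (subG S T) (aeval (R := ℚ) (Function.update (X : Option ι → MvPolynomial (Option ι) ℚ) (some k) (X none)) f) =
      aeval (subG (insert k S) (insert k T)) f := by
  rw [← AlgHom.comp_apply]
  refine DFunLike.congr_fun (MvPolynomial.algHom_ext ?_) f
  rintro (_ | i)
  · simp [subG]
  · by_cases h : i = k
    · subst h; simp [subG]
    · simp [subG, h]

lemma mem_of_subG (S : Finset ι) : ∀ f : MvPolynomial (Option ι) ℚ,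
    (∀ T, aeval (subG S T) f = 0) → f ∈ Ideal.span (relG '' (S : Set ι)) := by
  induction S using Finset.induction_on with
  | empty =>
    intro f hf
    have h : aeval (subG ∅ ∅) f = f := by
      have : (subG ∅ ∅ : Option ι → MvPolynomial (Option ι) ℚ) = X := by
        funext i; cases i <;> simp [subG]
      rw [this]; simp
    rw [← h, hf]
    exact Ideal.zero_mem _
  | insert k S hk ih =>
    intro f hf
    have hle : Ideal.span (relG '' (S : Set ι)) ≤
        Ideal.span (relG '' ((insert k S : Finset ι) : Set ι)) :=
      Ideal.span_mono (Set.image_mono (by simp))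
    obtain ⟨g, hg⟩ := dvd_sub_subst (some k) 0 f
    obtain ⟨h, hh⟩ := dvd_sub_subst (some k) (X none) g
    set f0 := aeval (R := ℚ) (Function.update (X : Option ι → MvPolynomial (Option ι) ℚ) (some k) 0) f with hf0
    set g1 := aeval (R := ℚ) (Function.update (X : Option ι → MvPolynomial (Option ι) ℚ) (some k) (X none)) g with hg1
    have m0 : f0 ∈ Ideal.span (relG '' (S : Set ι)) := by
      apply ih
      intro T
      rw [hf0, subG_update_zero S T k hk]
      exact hf _
    have m1 : g1 ∈ Ideal.span (relG '' (S : Set ι)) := by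
      apply ih
      intro T
      rw [hg1, subG_update_y S T k hk]
      have e := congrArg (aeval (subG (insert k S) (insert k T))) hg
      rw [map_sub, hf0, subG_update_zero', hf, hf] at e
      simp only [sub_zero, map_mul, aeval_X] at e
      have e2 : subG (insert k S) (insert k T) (some k) = X none := by simp [subG]
      rw [e2] at e
      exact (mul_eq_zero.mp e.symm).resolve_left (X_ne_zero _)
    have m2 : relG k ∈ Ideal.span (relG '' ((insert k S : Finset ι) : Set ι)) :=
      Ideal.subset_span ⟨k, by simp, rfl⟩
    have : f = f0 + X (some k) * g1 + (-h) * relG k := by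
      unfold relG
      linear_combination hg + X (some k) * hh
    rw [this]
    exact Ideal.add_mem _ (Ideal.add_mem _ (hle m0) (Ideal.mul_mem_left _ _ (hle m1)))
      (Ideal.mul_mem_left _ _ m2)

lemma mem_iff_subG (S : Finset ι) (f : MvPolynomial (Option ι) ℚ) :
    f ∈ Ideal.span (relG '' (S : Set ι)) ↔ ∀ T, aeval (subG S T) f = 0 := by
  refine ⟨fun hf T => ?_, mem_of_subG S f⟩
  have : Ideal.span (relG '' (S : Set ι)) ≤ RingHom.ker (aeval (R := ℚ) (subG S T)) := by
    rw [Ideal.span_le]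
    rintro _ ⟨i, hi, rfl⟩
    exact subG_relG S T i hi
  exact this hf

/-- The point with `y = 1` and `x_i = 1` iff `i ∈ T`. -/
def ptG (T : Finset ι) : Option ι → ℚ
  | none => 1
  | some i => if i ∈ T then 1 else 0

/-- Simultaneous evaluation at the points `ptG T`. -/
noncomputable def evG : MvPolynomial (Option ι) ℚ →ₗ[ℚ] (Finset ι → ℚ) :=
  LinearMap.pi fun T => (aeval (ptG T)).toLinearMap

lemma evG_apply (f : MvPolynomial (Option ι) ℚ) (T : Finset ι) :
    evG f T = aeval (ptG T) f := rfl

variable [Fintype ι]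

lemma subG_univ_homog (T : Finset ι) (j : ℕ) (f : MvPolynomial (Option ι) ℚ)
    (hf : f.IsHomogeneous j) :
    aeval (subG Finset.univ T) f = C (aeval (ptG T) f) * X none ^ j := by
  have hs : (subG Finset.univ T) = fun v : Option ι =>
      C (ptG T v) * (X none : MvPolynomial (Option ι) ℚ) := by
    funext v
    cases v with
    | none => simp [subG, ptG]
    | some i => by_cases h : i ∈ T <;> simp [subG, ptG, h]
  rw [hs, aeval_def, aeval_def, eval₂_eq, eval₂_eq, map_sum, Finset.sum_mul]
  refine Finset.sum_congr rfl fun d hd => ?_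
  have hdj : ∑ i ∈ d.support, d i = j := by
    have := hf (mem_support_iff.mp hd)
    have h2 := DFunLike.congr_fun (Finsupp.degree_eq_weight_one (R := ℕ) (σ := Option ι)) d
    rw [← Finsupp.degree_apply, h2]
    exact this
  simp only [mul_pow, Finset.prod_mul_distrib, Finset.prod_pow_eq_pow_sum, hdj, map_mul, map_prod,
    map_pow, algebraMap_eq, Algebra.algebraMap_self, RingHom.id_apply]
  ring

lemma mem_iff_evG (j : ℕ) (f : MvPolynomial (Option ι) ℚ) (hf : f.IsHomogeneous j) :
    f ∈ Ideal.span (Set.range (relG (ι := ι))) ↔ evG f = 0 := by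
  have := mem_iff_subG (Finset.univ : Finset ι) f
  rw [Finset.coe_univ, Set.image_univ] at this
  rw [this, funext_iff]
  refine forall_congr' fun T => ?_
  rw [subG_univ_homog T j f hf, evG_apply]
  simp

/-- Indicator of the supersets of `U`. -/
def indG (U T : Finset ι) : ℚ := if U ⊆ T then 1 else 0

lemma linInd_indG : LinearIndependent ℚ (indG (ι := ι)) := by
  rw [Fintype.linearIndependent_iff]
  intro c hc U
  induction U using Finset.strongInduction with
  | H U ih =>
    have := congrFun hc U
    rw [Finset.sum_apply, Finset.sum_eq_single U] at this
    · simpa [indG] using this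
    · intro V _ hV
      by_cases h : V ⊆ U
      · simp [ih V (Finset.ssubset_iff_subset_ne.mpr ⟨h, hV⟩)]
      · simp [indG, h]
    · simp

lemma evG_monomial (d : Option ι →₀ ℕ) :
    evG (monomial d 1) = indG (Finset.univ.filter fun i => d (some i) ≠ 0) := by
  funext T
  rw [evG_apply, aeval_monomial, Finsupp.prod_fintype _ _ (by simp), Fintype.prod_option]
  simp only [map_one, ptG, one_pow, one_mul, indG]
  split_ifs with h
  · refine Finset.prod_eq_one fun i _ => ?_
    by_cases hi : d (some i) = 0
    · simp [hi]
    · have : i ∈ T := h (by simp [hi])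
      simp [this]
  · rw [Finset.not_subset] at h
    obtain ⟨i, hi, hT⟩ := h
    refine Finset.prod_eq_zero (Finset.mem_univ i) ?_
    simp at hi
    simp [hT, hi]

lemma image_filter (j : ℕ) :
    (fun d : Option ι →₀ ℕ => (Finset.univ.filter fun i => d (some i) ≠ 0)) '' {d | d.degree = j} =
      {U : Finset ι | U.card ≤ j} := by
  ext U
  simp only [Set.mem_image, Set.mem_ofPred_eq]
  constructor
  · rintro ⟨d, hd, rfl⟩
    rw [← hd, Finsupp.degree_eq_sum, Fintype.sum_option, Finset.card_filter]
    refine le_trans (Finset.sum_le_sum fun i _ => ?_) (Nat.le_add_left _ _)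
    split_ifs <;> omega
  · intro hU
    refine ⟨Finsupp.equivFunOnFinite.symm
      (fun v => v.elim (j - U.card) (fun i => if i ∈ U then 1 else 0)), ?_, ?_⟩
    · rw [Finsupp.degree_eq_sum, Fintype.sum_option]
      simp
      omega
    · ext i; simp

lemma map_evG (j : ℕ) :
    Submodule.map evG (homogeneousSubmodule (Option ι) ℚ j) =
      Submodule.span ℚ (Set.range fun U : {U : Finset ι // U.card ≤ j} => indG U.1) := by
  have h1 : homogeneousSubmodule (Option ι) ℚ j =
      Submodule.span ℚ ((fun d => monomial d (1:ℚ)) '' {d | d.degree = j}) := by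
    rw [homogeneousSubmodule_eq_finsupp_supported]
    exact AddMonoidAlgebra.supported_eq_span_single ..
  rw [h1, Submodule.map_span, Set.image_image]
  congr 1
  simp only [evG_monomial]
  have := image_filter (ι := ι) j
  rw [← Set.image_image indG, this, Set.image_eq_range]
  rfl

lemma card_subsets (j : ℕ) : Fintype.card {U : Finset ι // U.card ≤ j} =
    ∑ ν ∈ Finset.range (min j (Fintype.card ι) + 1), (Fintype.card ι).choose ν := by
  rw [Fintype.card_subtype]
  rw [Finset.card_eq_sum_card_fiberwise (f := Finset.card)
    (t := Finset.range (min j (Fintype.card ι) + 1))]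
  · refine Finset.sum_congr rfl fun ν hν => ?_
    rw [← Finset.card_univ, ← Finset.card_powersetCard]
    congr 1
    ext U
    simp at hν ⊢
    omega
  · intro U hU
    have := Finset.card_le_univ U
    simp at hU ⊢
    omega

lemma finrank_main (j : ℕ) :
    Module.finrank ℚ (Submodule.map
      (Ideal.Quotient.mkₐ ℚ (Ideal.span (Set.range (relG (ι := ι))))).toLinearMap
      (homogeneousSubmodule (Option ι) ℚ j)) =
    ∑ ν ∈ Finset.range (min j (Fintype.card ι) + 1), (Fintype.card ι).choose ν := by
  have h2 : Module.finrank ℚ (Submodule.map evG (homogeneousSubmodule (Option ι) ℚ j)) =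
      ∑ ν ∈ Finset.range (min j (Fintype.card ι) + 1), (Fintype.card ι).choose ν := by
    rw [map_evG, finrank_span_eq_card, card_subsets]
    exact linInd_indG.comp _ Subtype.val_injective
  rw [← h2, ← LinearMap.range_domRestrict, ← LinearMap.range_domRestrict]
  refine LinearEquiv.finrank_eq ((LinearMap.quotKerEquivRange _).symm.trans
    ((Submodule.quotEquivOfEq _ _ ?_).trans (LinearMap.quotKerEquivRange _)))
  ext ⟨f, hf⟩
  have := mem_iff_evG j f hf
  rw [LinearMap.mem_ker, LinearMap.mem_ker, LinearMap.domRestrict_apply,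
    LinearMap.domRestrict_apply, ← this]
  exact Ideal.Quotient.eq_zero_iff_mem

end Helpers

lemma isRegular_main (n : ℕ) : RingTheory.Sequence.IsRegular
    (MvPolynomial (Option (Fin n)) ℚ) (List.ofFn (relG (ι := Fin n))) := by
  have key : ∀ i : ℕ, Ideal.ofList ((List.ofFn (relG (ι := Fin n))).take i) =
      Ideal.span (relG '' ((Finset.univ.filter fun k : Fin n => k.1 < i : Finset (Fin n)) :
        Set (Fin n))) := by
    intro i
    unfold Ideal.ofList
    congr 1
    ext r
    simp only [Set.mem_ofPred_eq, List.mem_take_iff_getElem, List.length_ofFn, List.getElem_ofFn,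
      Set.mem_image, Finset.coe_filter, Finset.mem_univ, true_and]
    constructor
    · rintro ⟨k, hk, rfl⟩
      exact ⟨⟨k, by omega⟩, by simp; omega, rfl⟩
    · rintro ⟨k, hk, rfl⟩
      exact ⟨k, by omega, rfl⟩
  refine ⟨⟨fun i hi => ?_⟩, ?_⟩
  · rw [isSMulRegular_quotient_iff_mem_of_smul_mem]
    intro f hf
    rw [key] at *
    simp only [smul_eq_mul, Ideal.mul_top] at hf ⊢
    rw [mem_iff_subG] at hf ⊢
    intro T
    have := hf T
    rw [map_mul] at this
    refine (mul_eq_zero.mp this).resolve_left ?_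
    rw [List.getElem_ofFn]
    apply subG_relG_ne
    simp
  · have hl : List.ofFn (relG (ι := Fin n)) = (List.ofFn (relG (ι := Fin n))).take n := by
      rw [List.take_of_length_le]; simp
    rw [hl, key, smul_eq_mul, Ideal.mul_top]
    intro h
    have h1 : (1 : MvPolynomial (Option (Fin n)) ℚ) ∈ (⊤ : Ideal _) := trivial
    rw [h] at h1
    have := (mem_iff_subG _ _).mp h1 ∅
    simp at this


/-- In `R = ℚ[x₁,…,x_{m−1},y]` the elements `y·x_i − x_i²`
form a regular sequence, and the quotient by the ideal they generate has
Hilbert series `(1+t)^{m−1}/(1−t)`: its degree-`j` component has dimension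
`Σ_{ν=0}^{min(j,m−1)} C(m−1,ν)`. -/
theorem stmt18 (m : ℕ) (hm : 2 ≤ m) :
    RingTheory.Sequence.IsRegular (Rring m) (List.ofFn (relElt m)) ∧
    ∀ j : ℕ,
      Module.finrank ℚ
        (Submodule.map
          (Ideal.Quotient.mkₐ ℚ (Ideal.span (Set.range (relElt m)))).toLinearMap
          (MvPolynomial.homogeneousSubmodule (Option (Fin (m - 1))) ℚ j)) =
      ∑ ν ∈ Finset.range (min j (m - 1) + 1), Nat.choose (m - 1) ν := by
  refine ⟨isRegular_main (m - 1), fun j => ?_⟩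
  have := finrank_main (ι := Fin (m - 1)) j
  rw [Fintype.card_fin] at this
  exact this
end

section
/- Let 1 ≤ n ≤ r and A := ℚ[y₁,…,y_n]. Define β_j^{(ν)} ∈ A for 1 ≤ j ≤ n and ν ≥ 0 by β_j^{(ν)} := δ_{j, n−ν} (Kronecker delta) for 0 ≤ ν ≤ n−1 and β_j^{(ν)} := Σ_{i=1}^{n} (−1)^{i−1} y_i · β_j^{(ν−i)} for ν ≥ n. Let c(t) := 1 + y₁t + … + y_n tⁿ ∈ A[[t]] and write c(t)^{−1} = Σ_{ν≥0} δ_ν t^ν with δ_ν ∈ A. Then the ideals of A generated by these families coincide: (β₁^{(r)}, …, β_n^{(r)}) = (δ_{r−n+1}, …, δ_r). -/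
open MvPolynomial

/-- The coefficients `β_j^{(ν)} ∈ A = ℚ[y₁,…,y_n]` (here `y_{i+1} = X i` and
`β_j^{(ν)} = beta n ν j` with `j` 0-indexed): `β_j^{(ν)} = δ_{j,n−ν}` for
`0 ≤ ν ≤ n−1`, and `β_j^{(ν)} = Σ_{i=1}^n (−1)^{i−1} y_i β_j^{(ν−i)}` for `ν ≥ n`. -/
noncomputable def betaCoeff (n : ℕ) (ν : ℕ) : Fin n → MvPolynomial (Fin n) ℚ :=
  if ν < n then fun j => if (j : ℕ) + 1 + ν = n then 1 else 0
  else fun j => ∑ i : Fin n,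
    ((-1 : ℚ) ^ (i : ℕ)) • (X i * betaCoeff n (ν - ((i : ℕ) + 1)) j)
termination_by ν
decreasing_by
  rename_i h
  have := i.isLt
  omega

/-- The power series `c(t) = 1 + y₁ t + … + y_n tⁿ`. -/
noncomputable def cSeries (n : ℕ) : PowerSeries (MvPolynomial (Fin n) ℚ) :=
  PowerSeries.mk fun ν =>
    if h : 1 ≤ ν ∧ ν ≤ n then X (⟨ν - 1, by omega⟩ : Fin n)
    else if ν = 0 then 1 else 0

theorem delta_rec (n : ℕ) (d : ℕ → MvPolynomial (Fin n) ℚ)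
    (hδ : cSeries n * PowerSeries.mk d = 1) (k : ℕ) (hk : 1 ≤ k) :
    d k = - ∑ i : Fin n, if (i : ℕ) < k then X i * d (k - ((i : ℕ) + 1)) else 0 := by
  have h := congrArg (PowerSeries.coeff k) hδ
  rw [PowerSeries.coeff_mul, Finset.Nat.sum_antidiagonal_eq_sum_range_succ_mk,
    Finset.sum_range_succ', PowerSeries.coeff_one, if_neg (by omega)] at h
  simp only [cSeries, PowerSeries.coeff_mk] at h
  rw [dif_neg (by omega), if_pos trivial, one_mul, Nat.sub_zero] at h
  rw [eq_neg_iff_add_eq_zero, add_comm]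
  refine Eq.trans ?_ h
  congr 1
  let g : ℕ → MvPolynomial (Fin n) ℚ := fun i => if h : i < n then X ⟨i, h⟩ else 0
  have e1 : (∑ i : Fin n, if (i : ℕ) < k then X i * d (k - ((i : ℕ) + 1)) else 0)
      = ∑ i ∈ Finset.range n, if i < k then g i * d (k - (i + 1)) else 0 := by
    rw [Finset.sum_range]
    refine Finset.sum_congr rfl fun i _ => ?_
    simp [g]
  rw [e1]
  have e2 : ∀ i ∈ Finset.range k, (if h : 1 ≤ i + 1 ∧ i + 1 ≤ n then
      (X (⟨i + 1 - 1, by omega⟩ : Fin n) : MvPolynomial (Fin n) ℚ)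
      else if i + 1 = 0 then 1 else 0) * d (k - (i + 1)) =
      if i < n then g i * d (k - (i + 1)) else 0 := by
    intro i _
    by_cases hi : i < n
    · simp [g, hi, Nat.succ_le_iff]
    · simp [hi, Nat.succ_le_iff]
  rw [Finset.sum_congr rfl e2, ← Finset.sum_filter, ← Finset.sum_filter]
  refine Finset.sum_congr ?_ fun _ _ => rfl
  ext i
  simp [and_comm]

/-- The shifted signed sequence. -/
noncomputable def aSeq (n : ℕ) (d : ℕ → MvPolynomial (Fin n) ℚ) (v : ℕ) :
    MvPolynomial (Fin n) ℚ :=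
  if v + 1 < n then 0 else (-1) ^ (v + 1 - n) * d (v + 1 - n)

theorem aSeq_rec (n : ℕ) (d : ℕ → MvPolynomial (Fin n) ℚ)
    (hδ : cSeries n * PowerSeries.mk d = 1) (v : ℕ) (hv : n ≤ v) :
    aSeq n d v = ∑ i : Fin n, (-1) ^ (i : ℕ) * (X i * aSeq n d (v - ((i : ℕ) + 1))) := by
  rw [aSeq, if_neg (by omega), delta_rec n d hδ _ (by omega), mul_neg, Finset.mul_sum,
    ← Finset.sum_neg_distrib]
  refine Finset.sum_congr rfl fun i _ => ?_
  have := i.isLt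
  by_cases hi : (i : ℕ) < v + 1 - n
  · rw [if_pos hi, aSeq, if_neg (by omega)]
    obtain ⟨m, hm⟩ : ∃ m, v + 1 - n = m + i + 1 := ⟨v + 1 - n - i - 1, by omega⟩
    have h1 : v - ((i : ℕ) + 1) + 1 - n = m := by omega
    have h2 : m + i + 1 - ((i : ℕ) + 1) = m := by omega
    rw [h1, hm, h2]
    ring
  · rw [if_neg hi, aSeq, if_pos (by omega)]
    simp

theorem beta_expand (n : ℕ) (f : ℕ → MvPolynomial (Fin n) ℚ)
    (hf : ∀ v, n ≤ v → f v = ∑ i : Fin n, (-1) ^ (i : ℕ) * (X i * f (v - ((i : ℕ) + 1))))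
    (m v : ℕ) : f (m + v) = ∑ j : Fin n, f (m + (n - ((j : ℕ) + 1))) * betaCoeff n v j := by
  induction v using Nat.strong_induction_on with
  | _ v ih =>
    rw [betaCoeff]
    by_cases hv : v < n
    · rw [if_pos hv, Finset.sum_eq_single (⟨n - 1 - v, by omega⟩ : Fin n)]
      · rw [if_pos (by simp only; omega), mul_one]
        congr 1
        simp only
        omega
      · intro b _ hb
        rw [if_neg, mul_zero]
        intro h
        apply hb
        ext
        simp only
        omega
      · simp
    · rw [if_neg hv, hf _ (by omega)]
      simp only [Finset.mul_sum]
      rw [Finset.sum_comm]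
      refine Finset.sum_congr rfl fun i _ => ?_
      have := i.isLt
      have h1 : m + v - ((i : ℕ) + 1) = m + (v - ((i : ℕ) + 1)) := by omega
      rw [h1, ih _ (by omega), Finset.mul_sum, Finset.mul_sum]
      refine Finset.sum_congr rfl fun j _ => ?_
      rw [Algebra.smul_def]
      simp only [map_pow, map_neg, map_one]
      ring

/-- Writing `c(t)^{−1} = Σ_ν δ_ν t^ν`, the ideal of
`A = ℚ[y₁,…,y_n]` generated by `β₁^{(r)},…,β_n^{(r)}` coincides with the ideal
generated by `δ_{r−n+1},…,δ_r`. -/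
theorem stmt19 (n r : ℕ) (hn : 1 ≤ n) (hnr : n ≤ r)
    (δc : ℕ → MvPolynomial (Fin n) ℚ)
    (hδ : cSeries n * PowerSeries.mk δc = 1) :
    Ideal.span (Set.range (betaCoeff n r)) =
      Ideal.span (Set.range fun j : Fin n => δc (r - n + 1 + (j : ℕ))) := by
  have hd0 : δc 0 = 1 := by
    have h := congrArg (PowerSeries.coeff 0) hδ
    simpa [cSeries, PowerSeries.coeff_mul] using h
  have key := fun m => beta_expand n (aSeq n δc) (aSeq_rec n δc hδ) m r
  have ha : ∀ m, aSeq n δc (m + r) = (-1) ^ (r - n + 1 + m) * δc (r - n + 1 + m) := by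
    intro m
    rw [aSeq, if_neg (by omega)]
    have : m + r + 1 - n = r - n + 1 + m := by omega
    rw [this]
  apply le_antisymm
  · rw [Ideal.span_le]
    rintro _ ⟨⟨j, hj⟩, rfl⟩
    induction j using Nat.strong_induction_on with
    | _ j ih =>
      have hk := key j
      rw [Fintype.sum_eq_add_sum_compl (⟨j, hj⟩ : Fin n)] at hk
      have h1 : aSeq n δc (j + (n - (j + 1))) = 1 := by
        have : j + (n - (j + 1)) + 1 - n = 0 := by omega
        rw [aSeq, if_neg (by omega), this, hd0]
        simp
      simp only [h1, one_mul] at hk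
      rw [← sub_eq_iff_eq_add] at hk
      rw [SetLike.mem_coe, ← hk, ha]
      refine Ideal.sub_mem _ (Ideal.mul_mem_left _ _ (Ideal.subset_span ⟨⟨j, hj⟩, rfl⟩)) ?_
      refine Ideal.sum_mem _ fun i hi => ?_
      have hne : (i : ℕ) ≠ j := by
        intro h
        simp [Fin.ext_iff, h] at hi
      by_cases hij : (i : ℕ) < j
      · exact Ideal.mul_mem_left _ _ (ih i hij i.isLt)
      · have := i.isLt
        rw [aSeq, if_pos (by omega), zero_mul]
        exact Ideal.zero_mem _
  · rw [Ideal.span_le]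
    rintro _ ⟨j, rfl⟩
    have hk := key j
    rw [ha] at hk
    have h2 : δc (r - n + 1 + (j : ℕ)) = (-1) ^ (r - n + 1 + (j : ℕ)) *
        ((-1) ^ (r - n + 1 + (j : ℕ)) * δc (r - n + 1 + (j : ℕ))) := by
      rw [← mul_assoc, ← mul_pow]
      simp
    simp only [SetLike.mem_coe]
    rw [h2, hk]
    refine Ideal.mul_mem_left _ _ (Ideal.sum_mem _ fun i _ => ?_)
    exact Ideal.mul_mem_left _ _ (Ideal.subset_span ⟨i, rfl⟩)
end
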